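/- Let n ≥ 1. The Jordan type induces a surjection from the set of nilpotent SO(2n,ℂ)-orbits in so(2n,ℂ) onto the set of 1-admissible partitions of 2n. If a 1-admissible partition d of 2n has at least one odd part, then the nilpotent elements of so(2n,ℂ) of Jordan type d form exactly one SO(2n,ℂ)-orbit; if d is very even (all parts even, hence all with even multiplicity), they form exactly two SO(2n,ℂ)-orbits. -/

import Mathlib

/-!
The argument identifies a nilpotent endomorphism `f` of a complex space with a torsion module over
`ℂ[X]`. The structure theorem over a principal ideal domain then says that `f` has a Jordan type
(`exists_type`) and that two nilpotent endomorphisms of the same type are conjugate (`exists_conj`).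
The type is recovered from the kernel dimensions by second differences (`type_unique`).

*Admissibility.* The odd powers of a skew-symmetric `X` are skew-symmetric, hence of even rank. The
multiplicity of an even part `p` is a second difference of kernel dimensions centred at `p`, so it
is even (`admissible_of_skew`).

*Existence.* A block of odd size is skew for an antidiagonal form with alternating signs, and a pair
of equal blocks is skew for the pairing of a space with its dual, so each admissible type is
realized by a matrix `J` which is skew for some nondegenerate symmetric form `S`
(`realizable_of_admissible`). Conjugation by a symmetric square root of `S` makes `J` skew-symmetric
(`exists_skew`).

*Orthogonal conjugacy.* If `P` conjugates the skew-symmetric `X` to the skew-symmetric `Y`, then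
`PᵀP` commutes with `X`. It has a square root which is a polynomial in it, and dividing `P` by this
square root gives an orthogonal matrix that still conjugates `X` to `Y` (`exists_orth`). So the
nilpotents of a given type form a single orbit of the full orthogonal group, and the number of
orbits of the special orthogonal group is one or two, according to whether or not some orthogonal
matrix of determinant `-1` commutes with `X`.

*The determinant.* If there is an odd part, then `-1` on one block of that size, extended by the
identity, is orthogonal of determinant `-1` and commutes with `J`. If all parts are even and `g` is
orthogonal and commutes with `X`, then each generalized eigenspace of `g` is a summand of the module
of `X`, so its blocks are among those of `X` and its dimension is even. As the eigenvalues of `g`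
also occur in pairs `c, c⁻¹` of equal multiplicity, `det g = 1` (`det_eq_one`). Hence `X` and its
conjugate by a reflection represent two different orbits.
-/

open Matrix

/-- A partition is `ε`-admissible if every even part (when `ε = 1`), respectively every
odd part (when `ε = -1`), occurs with even multiplicity. -/
def EpsAdmissible {m : ℕ} (ε : ℤ) (d : Nat.Partition m) : Prop :=
  ∀ p : ℕ, ((ε = 1 ∧ Even p) ∨ (ε = -1 ∧ Odd p)) → Even (Multiset.count p d.parts)

/-- A partition is very even if all its parts are even, each occurring with even
multiplicity. -/
def VeryEven {m : ℕ} (d : Nat.Partition m) : Prop :=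
  ∀ p ∈ d.parts, Even p ∧ Even (Multiset.count p d.parts)

/-- A square complex matrix `X` has Jordan type the partition `d` if
`dim ker (X^i) = Σ_j min (d_j, i)` for all `i ≥ 0`. -/
def MatJordanType {N : ℕ} (X : Matrix (Fin N) (Fin N) ℂ) {m : ℕ} (d : Nat.Partition m) : Prop :=
  ∀ i : ℕ, Module.finrank ℂ (LinearMap.ker (Matrix.mulVecLin X ^ i)) =
    (d.parts.map (fun p => min p i)).sum

/-- `so(N, ℂ)`: complex antisymmetric `N × N` matrices. -/
def soSet (N : ℕ) : Set (Matrix (Fin N) (Fin N) ℂ) := {X | Xᵀ = -X}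

/-- `SO(N, ℂ)`: complex special orthogonal group. -/
def SOSet (N : ℕ) : Set (Matrix (Fin N) (Fin N) ℂ) := {g | gᵀ * g = 1 ∧ g.det = 1}

/-- `X` and `Y` are conjugate under `SO(N, ℂ)`. -/
def SOConj (N : ℕ) (X Y : Matrix (Fin N) (Fin N) ℂ) : Prop :=
  ∃ g ∈ SOSet N, g * X * g⁻¹ = Y

section
open Polynomial Module

/-! ### Jordan types of nilpotent endomorphisms -/

/-- An endomorphism `f` has Jordan type the multiset `m` if `dim ker (f^i) = Σ_{p ∈ m} min (p, i)`
for all `i`. Zero entries of `m` contribute nothing and are allowed. -/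
def HasType {V : Type} [AddCommGroup V] [Module ℂ V] (f : Module.End ℂ V) (m : Multiset ℕ) : Prop :=
  ∀ i : ℕ, finrank ℂ (LinearMap.ker (f ^ i)) = (m.map (fun p => min p i)).sum

/-- The multiplicity of `p` is the negated second difference of the numbers `Σ min (·, i)`. -/
lemma count_add_sums (m : Multiset ℕ) (p : ℕ) :
    m.count (p + 1) + (m.map (fun x => min x p)).sum + (m.map (fun x => min x (p + 2))).sum =
      2 * (m.map (fun x => min x (p + 1))).sum := by
  induction m using Multiset.induction with
  | empty => simp
  | cons a s ih =>
    simp only [Multiset.count_cons, Multiset.map_cons, Multiset.sum_cons]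
    split_ifs <;> omega

/-- A multiset of positive integers is determined by the kernel dimensions it prescribes. -/
lemma type_unique {m m' : Multiset ℕ} (h0 : ∀ x ∈ m, x ≠ 0) (h0' : ∀ x ∈ m', x ≠ 0)
    (h : ∀ i, (m.map (fun x => min x i)).sum = (m'.map (fun x => min x i)).sum) : m = m' := by
  ext p
  rcases p with _ | p
  · rw [Multiset.count_eq_zero_of_notMem (fun hh => h0 _ hh rfl),
      Multiset.count_eq_zero_of_notMem (fun hh => h0' _ hh rfl)]
  · have h1 := count_add_sums m p
    have h2 := count_add_sums m' p
    rw [h, h, h] at h1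
    omega

section
variable {V W : Type} [AddCommGroup V] [Module ℂ V] [AddCommGroup W] [Module ℂ W]

lemma intertwine_pow {f : Module.End ℂ V} {g : Module.End ℂ W} (e : V ≃ₗ[ℂ] W)
    (h : ∀ v, e (f v) = g (e v)) (i : ℕ) (v : V) : e ((f ^ i) v) = (g ^ i) (e v) := by
  induction i generalizing v with
  | zero => simp
  | succ i ih => rw [pow_succ, pow_succ, Module.End.mul_apply, Module.End.mul_apply, ih, h]

lemma finrank_ker_conj {f : Module.End ℂ V} {g : Module.End ℂ W} (e : V ≃ₗ[ℂ] W)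
    (h : ∀ v, e (f v) = g (e v)) :
    finrank ℂ (LinearMap.ker f) = finrank ℂ (LinearMap.ker g) := by
  have : (LinearMap.ker f).map (e : V →ₗ[ℂ] W) = LinearMap.ker g := by
    ext w
    simp only [Submodule.mem_map, LinearMap.mem_ker]
    constructor
    · rintro ⟨v, hv, rfl⟩
      simp [← h, hv]
    · intro hw
      refine ⟨e.symm w, e.injective ?_, by simp⟩
      simp [h, hw]
  rw [← this]
  exact (LinearEquiv.finrank_map_eq e _).symm

lemma HasType.conj {f : Module.End ℂ V} {g : Module.End ℂ W} {m : Multiset ℕ} (hf : HasType f m)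
    (e : V ≃ₗ[ℂ] W) (h : ∀ v, e (f v) = g (e v)) : HasType g m := fun i => by
  rw [← hf i, finrank_ker_conj e (intertwine_pow e h i)]

lemma finrank_ker_pi {ι : Type} [Fintype ι] {Q : ι → Type} [∀ i, AddCommGroup (Q i)]
    [∀ i, Module ℂ (Q i)] [∀ i, FiniteDimensional ℂ (Q i)]
    (F : Module.End ℂ (∀ i, Q i)) (g : ∀ i, Module.End ℂ (Q i)) (h : ∀ v i, F v i = g i (v i)) :
    finrank ℂ (LinearMap.ker F) = ∑ i, finrank ℂ (LinearMap.ker (g i)) := by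
  rw [← finrank_pi_fintype]
  refine LinearEquiv.finrank_eq
    { toFun := fun v i => ⟨v.1 i, by
        rw [LinearMap.mem_ker, ← h, LinearMap.mem_ker.1 v.2]; rfl⟩
      invFun := fun w => ⟨fun i => (w i).1, by
        rw [LinearMap.mem_ker]; funext i; rw [h]; exact (w i).2⟩
      map_add' := fun _ _ => rfl
      map_smul' := fun _ _ => rfl
      left_inv := fun _ => rfl
      right_inv := fun _ => rfl }

/-- A nilpotent endomorphism whose index of nilpotency is the dimension is a single block. -/
lemma hasType_single [FiniteDimensional ℂ V] {f : Module.End ℂ V} {k : ℕ}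
    (hk : finrank ℂ V = k) (h0 : f ^ k = 0) (h1 : 0 < k → f ^ (k - 1) ≠ 0) :
    HasType f {k} := by
  intro i
  simp only [Multiset.map_singleton, Multiset.sum_singleton]
  -- the kernels of the powers of `f` increase strictly up to the power `k`
  have step : ∀ j < k, finrank ℂ (LinearMap.ker (f ^ j)) + 1 ≤
      finrank ℂ (LinearMap.ker (f ^ (j + 1))) := by
    intro j hj
    have hle : LinearMap.ker (f ^ j) ≤ LinearMap.ker (f ^ (j + 1)) := by
      intro v hv
      rw [LinearMap.mem_ker] at hv ⊢
      rw [pow_succ', Module.End.mul_apply, hv, map_zero]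
    apply Nat.succ_le_of_lt
    apply Submodule.finrank_lt_finrank_of_lt
    refine lt_of_le_of_ne hle fun heq => h1 (by omega) ?_
    have hc := Module.End.ker_pow_constant (f := f) (k := j) heq
    have e1 := hc (k - j)
    have e2 := hc (k - 1 - j)
    rw [show j + (k - j) = k by omega, h0, LinearMap.ker_zero] at e1
    rw [show j + (k - 1 - j) = k - 1 by omega, e1] at e2
    exact LinearMap.ker_eq_top.1 e2.symm
  have lo : ∀ j ≤ k, j ≤ finrank ℂ (LinearMap.ker (f ^ j)) := by
    intro j
    induction j with
    | zero => simp
    | succ j ih => intro hj; have := step j (by omega); have := ih (by omega); omega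
  have hi : ∀ j ≤ k, finrank ℂ (LinearMap.ker (f ^ (k - j))) + j ≤ k := by
    intro j
    induction j with
    | zero => simpa [← hk] using Submodule.finrank_le _
    | succ j ih =>
      intro hj
      have := step (k - (j + 1)) (by omega)
      rw [show k - (j + 1) + 1 = k - j by omega] at this
      have := ih (by omega)
      omega
  rcases le_total i k with hik | hik
  · have a := lo i hik
    have b := hi (k - i) (by omega)
    rw [show k - (k - i) = i by omega] at b
    rw [min_eq_right hik]
    omega
  · have : f ^ i = 0 := by
      rw [← Nat.sub_add_cancel hik, pow_add, h0, mul_zero]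
    rw [this, LinearMap.ker_zero, finrank_top, hk, min_eq_left hik]

lemma HasType.prod [FiniteDimensional ℂ V] [FiniteDimensional ℂ W] {f : Module.End ℂ V}
    {g : Module.End ℂ W} {m m' : Multiset ℕ}
    (hf : HasType f m) (hg : HasType g m') : HasType (f.prodMap g) (m + m') := fun i => by
  have : (f.prodMap g) ^ i = (f ^ i).prodMap (g ^ i) := by
    induction i with
    | zero => rfl
    | succ i ih => rw [pow_succ, ih, pow_succ, pow_succ]; rfl
  rw [this, LinearMap.ker_prodMap, Multiset.map_add, Multiset.sum_add, ← hf i, ← hg i, ← finrank_prod]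
  exact LinearEquiv.finrank_eq
    { toFun := fun v => (⟨v.1.1, v.2.1⟩, ⟨v.1.2, v.2.2⟩)
      invFun := fun v => ⟨(v.1.1, v.2.1), v.1.2, v.2.2⟩
      map_add' := fun _ _ => rfl
      map_smul' := fun _ _ => rfl
      left_inv := fun _ => rfl
      right_inv := fun _ => rfl }

lemma HasType.sum_eq [FiniteDimensional ℂ V] {f : Module.End ℂ V} {m : Multiset ℕ}
    (hf : HasType f m) (hn : IsNilpotent f) : m.sum = finrank ℂ V := by
  obtain ⟨k, hk⟩ := hn
  have h := hf (k + m.sum)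
  rw [pow_add, hk, zero_mul, LinearMap.ker_zero, finrank_top] at h
  rw [h]
  congr 1
  conv_lhs => rw [← Multiset.map_id m]
  refine Multiset.map_congr rfl fun x hx => ?_
  have := Multiset.le_sum_of_mem hx
  simp only [id]
  omega

/-- Jordan decomposition as a module over `ℂ[X]`. -/
lemma exists_jordan [FiniteDimensional ℂ V] (f : Module.End ℂ V) (hn : IsNilpotent f) :
    ∃ (ι : Type) (_ : Fintype ι) (k : ι → ℕ), (∀ i, k i ≠ 0) ∧
      Nonempty (AEval' f ≃ₗ[ℂ[X]] ∀ i, ℂ[X] ⧸ Submodule.span ℂ[X] {(X : ℂ[X]) ^ k i}) := by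
  obtain ⟨K, hK⟩ := hn
  have ht : Module.IsTorsion' (AEval' f) (Submonoid.powers (X : ℂ[X])) := by
    intro x
    obtain ⟨v, rfl⟩ := (AEval'.of f).surjective x
    refine ⟨⟨X ^ K, K, rfl⟩, ?_⟩
    change (X : ℂ[X]) ^ K • AEval'.of f v = 0
    rw [AEval'.X_pow_smul_of, hK, zero_smul, map_zero]
  classical
  obtain ⟨d, k, ⟨e⟩⟩ := Module.torsion_by_prime_power_decomposition irreducible_X ht
  refine ⟨{i : Fin d // k i ≠ 0}, inferInstance, fun i => k i.1, fun i => i.2, ⟨?_⟩⟩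
  refine (e.trans (DirectSum.linearEquivFunOnFintype _ _ _)).trans
    (LinearEquiv.ofBijective (LinearMap.pi fun i => LinearMap.proj i.1) ⟨?_, ?_⟩)
  · rw [injective_iff_map_eq_zero]
    intro v hv
    funext i
    by_cases hi : k i = 0
    · have : Subsingleton (ℂ[X] ⧸ Submodule.span ℂ[X] {(X : ℂ[X]) ^ k i}) := by
        rw [Submodule.Quotient.subsingleton_iff, hi, pow_zero]
        exact Ideal.span_singleton_one
      exact Subsingleton.elim _ _
    · exact congrFun hv ⟨i, hi⟩
  · intro w
    refine ⟨fun i => if hi : k i ≠ 0 then w ⟨i, hi⟩ else 0, ?_⟩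
    funext i
    have := i.2
    simp [this]

lemma lsmul_mk (k : ℕ) (r q : ℂ[X]) :
    Algebra.lsmul ℂ ℂ (ℂ[X] ⧸ Submodule.span ℂ[X] {(X : ℂ[X]) ^ k}) r
      (Submodule.Quotient.mk q) = Submodule.Quotient.mk (r * q) := rfl

lemma mk_eq_zero_iff_dvd (k : ℕ) (q : ℂ[X]) :
    (Submodule.Quotient.mk q : ℂ[X] ⧸ Submodule.span ℂ[X] {(X : ℂ[X]) ^ k}) = 0 ↔ X ^ k ∣ q := by
  rw [Submodule.Quotient.mk_eq_zero]
  exact Ideal.mem_span_singleton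

/-- The type of multiplication by `X` on `ℂ[X]/(X^k)`. -/
lemma hasType_quot (k : ℕ) :
    HasType (Algebra.lsmul ℂ ℂ (ℂ[X] ⧸ Submodule.span ℂ[X] {(X : ℂ[X]) ^ k}) (X : ℂ[X])) {k} := by
  have hm : (X ^ k : ℂ[X]).Monic := monic_X_pow k
  have : FiniteDimensional ℂ (ℂ[X] ⧸ Submodule.span ℂ[X] {(X : ℂ[X]) ^ k}) :=
    hm.finite_quotient
  apply hasType_single
  · have := finrank_quotient_span_eq_natDegree (K := ℂ) (f := (X : ℂ[X]) ^ k)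
    rw [natDegree_X_pow] at this
    exact this
  · rw [← map_pow]
    refine LinearMap.ext fun q => ?_
    obtain ⟨q, rfl⟩ := Submodule.Quotient.mk_surjective _ q
    rw [lsmul_mk, LinearMap.zero_apply, mk_eq_zero_iff_dvd]
    exact dvd_mul_right _ _
  · intro hk h
    rw [← map_pow] at h
    have h1 := LinearMap.congr_fun h (Submodule.Quotient.mk 1)
    rw [lsmul_mk, LinearMap.zero_apply, mk_eq_zero_iff_dvd, mul_one, X_pow_dvd_iff] at h1
    simpa using h1 (k - 1) (by omega)

lemma hasType_of_jordan {f : Module.End ℂ V} {ι : Type} [Fintype ι] {k : ι → ℕ}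
    (e : AEval' f ≃ₗ[ℂ[X]] ∀ i, ℂ[X] ⧸ Submodule.span ℂ[X] {(X : ℂ[X]) ^ k i}) :
    HasType f (Finset.univ.val.map k) := by
  intro j
  have : ∀ i, FiniteDimensional ℂ (ℂ[X] ⧸ Submodule.span ℂ[X] {(X : ℂ[X]) ^ k i}) :=
    fun i => (monic_X_pow (k i)).finite_quotient
  have h1 := finrank_ker_conj (f := f ^ j)
    (g := Algebra.lsmul ℂ ℂ (∀ i, ℂ[X] ⧸ Submodule.span ℂ[X] {(X : ℂ[X]) ^ k i}) (X ^ j : ℂ[X]))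
    ((AEval'.of f).trans (e.restrictScalars ℂ)) (fun v => by
      change e (AEval'.of f ((f ^ j) v)) = (X ^ j : ℂ[X]) • e (AEval'.of f v)
      rw [← map_smul, AEval'.X_pow_smul_of]; rfl)
  rw [h1, finrank_ker_pi _
    (fun i => Algebra.lsmul ℂ ℂ (ℂ[X] ⧸ Submodule.span ℂ[X] {(X : ℂ[X]) ^ k i}) (X : ℂ[X]) ^ j)
    (fun v i => by rw [← map_pow]; rfl)]
  simp only [hasType_quot (k _) j, Multiset.map_map, Multiset.map_singleton,
    Multiset.sum_singleton]
  rfl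

lemma exists_type [FiniteDimensional ℂ V] (f : Module.End ℂ V) (hn : IsNilpotent f) :
    ∃ m : Multiset ℕ, (∀ x ∈ m, x ≠ 0) ∧ HasType f m := by
  obtain ⟨ι, _, k, hk, ⟨e⟩⟩ := exists_jordan f hn
  refine ⟨_, ?_, hasType_of_jordan e⟩
  intro x hx
  obtain ⟨i, -, rfl⟩ := Multiset.mem_map.1 hx
  exact hk i

/-- Nilpotent endomorphisms of the same type are conjugate. -/
lemma exists_conj [FiniteDimensional ℂ V] [FiniteDimensional ℂ W] {f : Module.End ℂ V}
    {g : Module.End ℂ W} (hf : IsNilpotent f) (hg : IsNilpotent g) {m : Multiset ℕ}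
    (hfm : HasType f m) (hgm : HasType g m) : ∃ e : V ≃ₗ[ℂ] W, ∀ v, e (f v) = g (e v) := by
  obtain ⟨ι, _, k, hk, ⟨e⟩⟩ := exists_jordan f hf
  obtain ⟨ι', _, k', hk', ⟨e'⟩⟩ := exists_jordan g hg
  have hm : Finset.univ.val.map k = Finset.univ.val.map k' := by
    apply type_unique
    · simpa using hk
    · simpa using hk'
    · intro i
      rw [← hasType_of_jordan e i, ← hasType_of_jordan e' i, hfm, hgm]
  obtain ⟨σ, hσ⟩ : ∃ σ : ι ≃ ι', k = k' ∘ σ := by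
    classical
    have hc : ∀ c, Nonempty ({i // k i = c} ≃ {i // k' i = c}) := fun c => by
      have h := congrArg (Multiset.count c) hm
      rw [Multiset.count_map, Multiset.count_map] at h
      rw [← Fintype.card_eq, Fintype.card_subtype, Fintype.card_subtype]
      simpa only [Finset.card_def, Finset.filter_val, eq_comm] using h
    exact ⟨Equiv.ofFiberEquiv fun c => (hc c).some, by
      funext i; exact (Equiv.ofFiberEquiv_map _ i).symm⟩
  subst hσ
  let E : AEval' f ≃ₗ[ℂ[X]] AEval' g := (e.trans (LinearEquiv.piCongrLeft ℂ[X]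
    (fun i => ℂ[X] ⧸ Submodule.span ℂ[X] {(X : ℂ[X]) ^ k' i}) σ)).trans e'.symm
  refine ⟨((AEval'.of f).trans (E.restrictScalars ℂ)).trans (AEval'.of g).symm, fun v => ?_⟩
  change (AEval'.of g).symm (E (AEval'.of f (f v))) = g ((AEval'.of g).symm (E (AEval'.of f v)))
  rw [← AEval'.X_smul_of, map_smul, AEval'.of_symm_X_smul]
end

/-! ### Square roots and orthogonal conjugacy -/

/-- An invertible complex matrix has a square root which is a polynomial in it. -/
lemma exists_sqrt_poly {ι : Type} [Fintype ι] [DecidableEq ι] (A : Matrix ι ι ℂ) (hA : IsUnit A) :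
    ∃ p : ℂ[X], aeval A p * aeval A p = A := by
  set χ := A.charpoly with hχ
  have hχ0 : ¬ (X : ℂ[X]) ∣ χ := by
    rw [X_dvd_iff]
    intro h
    have := Matrix.det_eq_sign_charpoly_coeff A
    rw [← hχ, h, mul_zero] at this
    exact ((Matrix.isUnit_iff_isUnit_det A).1 hA).ne_zero this
  -- interpolate the square roots of the eigenvalues
  choose sq hsq using fun z : ℂ => IsAlgClosed.exists_pow_nat_eq z (n := 2) (by norm_num)
  set q : ℂ[X] := Lagrange.interpolate χ.roots.toFinset id sq with hq
  have hroot : ∀ a ∈ χ.roots, X - C a ∣ q ^ 2 - X := by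
    intro a ha
    rw [dvd_iff_isRoot, IsRoot.def]
    have := Lagrange.eval_interpolate_at_node (s := χ.roots.toFinset) (v := id) sq
      (Set.injOn_id _) (Multiset.mem_toFinset.2 ha)
    simp only [id] at this
    rw [eval_sub, eval_pow, hq, this, hsq, eval_X, sub_self]
  have hdvd : χ ∣ (q ^ 2 - X) ^ χ.roots.card := by
    have h1 : (χ.roots.map fun a => X - C a).prod = χ :=
      ((IsAlgClosed.splits χ).eq_prod_roots_of_monic A.charpoly_monic).symm
    calc χ = (χ.roots.map fun a => X - C a).prod := h1.symm
      _ ∣ (χ.roots.map fun _ => q ^ 2 - X).prod := Multiset.prod_dvd_prod_of_dvd _ _ hroot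
      _ = _ := by simp
  let S := AdjoinRoot χ
  let x : S := AdjoinRoot.mk χ X
  let y : S := AdjoinRoot.mk χ q
  have hx : IsUnit x := by
    obtain ⟨a, b, hab⟩ := (irreducible_X.coprime_iff_not_dvd).2 hχ0
    refine IsUnit.of_mul_eq_one (AdjoinRoot.mk χ a) ?_
    have := congrArg (AdjoinRoot.mk χ) hab
    rw [map_add, map_mul, map_mul, AdjoinRoot.mk_self, mul_zero, add_zero, map_one] at this
    rw [mul_comm]; exact this
  have hnil : IsNilpotent (y ^ 2 - x) := by
    refine ⟨χ.roots.card, ?_⟩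
    have := AdjoinRoot.mk_eq_zero.2 hdvd
    rwa [map_pow, map_sub, map_pow] at this
  have hy : IsUnit y := by
    have : IsUnit (x + (y ^ 2 - x)) := by
      rw [add_comm]; exact hnil.isUnit_add_right_of_commute hx (Commute.all _ _)
    rw [add_sub_cancel] at this
    exact isUnit_of_mul_isUnit_left (by rwa [pow_two] at this)
  have h2 : IsUnit (2 : S) := by
    have := (IsUnit.mk0 (2 : ℂ) two_ne_zero).map (algebraMap ℂ S)
    rwa [map_ofNat] at this
  -- Newton's method corrects the interpolating polynomial to an exact square root
  obtain ⟨r, ⟨-, hr⟩, -⟩ := existsUnique_nilpotent_sub_and_aeval_eq_zero (R := S) (S := S)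
    (P := X ^ 2 - C x) (x := y) (by simpa using hnil)
    (by
      have := h2.mul hy
      simpa only [derivative_sub, derivative_X_pow, derivative_C, sub_zero, Nat.cast_ofNat,
        map_mul, aeval_C, Algebra.algebraMap_self, RingHom.id_apply, Nat.add_one_sub_one, pow_one, aeval_X] using this)
  obtain ⟨p, rfl⟩ := AdjoinRoot.mk_surjective r
  refine ⟨p, ?_⟩
  have h3 : χ ∣ p ^ 2 - X := by
    rw [← AdjoinRoot.mk_eq_zero, map_sub, map_pow]
    simpa only [map_sub, map_pow, aeval_X, aeval_C, Algebra.algebraMap_self,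
      RingHom.id_apply] using hr
  obtain ⟨c, hc⟩ := h3
  have h4 := congrArg (aeval A) hc
  rw [map_mul, Matrix.aeval_self_charpoly, zero_mul, map_sub, map_pow, aeval_X, sub_eq_zero] at h4
  rw [← pow_two, h4]

section
variable {ι : Type} [Fintype ι] [DecidableEq ι]

lemma transpose_aeval (A : Matrix ι ι ℂ) (p : ℂ[X]) : (aeval A p)ᵀ = aeval Aᵀ p := by
  induction p using Polynomial.induction_on' with
  | add p q hp hq => simp [hp, hq]
  | monomial n a => simp [aeval_monomial, Matrix.transpose_pow,
      Algebra.algebraMap_eq_smul_one]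

/-- A symmetric invertible complex matrix has a symmetric square root commuting with everything
which commutes with the matrix. -/
lemma exists_symm_sqrt (A : Matrix ι ι ℂ) (hA : IsUnit A) (hs : Aᵀ = A) :
    ∃ R : Matrix ι ι ℂ, R * R = A ∧ Rᵀ = R ∧ IsUnit R ∧ ∀ B, Commute A B → Commute R B := by
  obtain ⟨p, hp⟩ := exists_sqrt_poly A hA
  refine ⟨aeval A p, hp, by rw [transpose_aeval, hs], ?_, fun B hB => ?_⟩
  · rw [Matrix.isUnit_iff_isUnit_det] at hA ⊢
    rw [← hp, Matrix.det_mul] at hA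
    exact isUnit_of_mul_isUnit_left hA
  · have : aeval A p ∈ Subalgebra.centralizer ℂ {B} := by
      have hA' : A ∈ Subalgebra.centralizer ℂ {B} := by
        rw [Subalgebra.mem_centralizer_iff]
        rintro _ rfl
        exact hB.eq.symm
      exact Algebra.adjoin_le (Set.singleton_subset_iff.2 hA')
        (aeval_mem_adjoin_singleton ℂ A)
    rw [Subalgebra.mem_centralizer_iff] at this
    exact (this B rfl).symm

/-- Similar skew-symmetric matrices are orthogonally similar: if `P` conjugates `X` to `Y`, then
`PᵀP` commutes with `X`, and `P` divided by the square root of `PᵀP` is orthogonal. -/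
lemma exists_orth {X Y P : Matrix ι ι ℂ} (hX : Xᵀ = -X) (hY : Yᵀ = -Y) (hP : IsUnit P)
    (h : P * X = Y * P) : ∃ g : Matrix ι ι ℂ, gᵀ * g = 1 ∧ g * X = Y * g := by
  have hPt : IsUnit Pᵀ := by
    rw [Matrix.isUnit_iff_isUnit_det] at hP ⊢
    rwa [Matrix.det_transpose]
  have hc : Commute (Pᵀ * P) X := by
    have h' := congrArg Matrix.transpose h
    rw [Matrix.transpose_mul, Matrix.transpose_mul, hX, hY, mul_neg, neg_mul, neg_inj] at h'
    change Pᵀ * P * X = X * (Pᵀ * P)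
    rw [mul_assoc, h, ← mul_assoc, ← h', mul_assoc]
  obtain ⟨R, hR, hRt, hRu, hRc⟩ := exists_symm_sqrt (Pᵀ * P) (hPt.mul hP) (by simp)
  obtain ⟨u, rfl⟩ := hRu
  have hct := hRc X hc
  have hinv : ((↑u⁻¹ : Matrix ι ι ℂ))ᵀ = ↑u⁻¹ := by
    have : ((↑u⁻¹ : Matrix ι ι ℂ))ᵀ * (u : Matrix ι ι ℂ) = 1 := by
      conv_lhs => rw [← hRt]
      rw [← Matrix.transpose_mul, Units.mul_inv, Matrix.transpose_one]
    exact (Units.inv_eq_of_mul_eq_one_left this).symm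
  refine ⟨P * (↑u⁻¹ : Matrix ι ι ℂ), ?_, ?_⟩
  · rw [Matrix.transpose_mul, hinv, mul_assoc, ← mul_assoc Pᵀ, ← hR]
    simp
  · have : (↑u⁻¹ : Matrix ι ι ℂ) * X = X * (↑u⁻¹ : Matrix ι ι ℂ) := (hct.units_inv_left).eq
    rw [mul_assoc, this, ← mul_assoc, h, mul_assoc]

lemma isNilpotent_toLin' {X : Matrix ι ι ℂ} (h : IsNilpotent X) : IsNilpotent X.toLin' := by
  obtain ⟨k, hk⟩ := h
  exact ⟨k, by rw [← Matrix.toLin'_pow, hk, map_zero]⟩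

end

/-! ### Skew-symmetric matrices have admissible type -/

section
variable {ι : Type} [Fintype ι] [DecidableEq ι]

/-- A skew-symmetric matrix has even rank: it induces an invertible skew-symmetric matrix on a
complement of its kernel. -/
lemma even_rank {A : Matrix ι ι ℂ} (hA : Aᵀ = -A) :
    Even (finrank ℂ (LinearMap.range A.toLin')) := by
  obtain ⟨W, hW⟩ := Submodule.exists_isCompl (LinearMap.ker A.toLin')
  have hr : finrank ℂ W = finrank ℂ (LinearMap.range A.toLin') := by
    have h1 := Submodule.finrank_add_eq_of_isCompl hW
    have h2 := LinearMap.finrank_range_add_finrank_ker A.toLin'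
    omega
  rw [← hr]
  have hskew : ∀ u v : ι → ℂ, u ⬝ᵥ A *ᵥ v = -((A *ᵥ u) ⬝ᵥ v) := by
    intro u v
    rw [Matrix.dotProduct_mulVec, ← Matrix.mulVec_transpose, hA, Matrix.neg_mulVec, neg_dotProduct]
  let b := Module.finBasis ℂ W
  let M : Matrix (Fin (finrank ℂ W)) (Fin (finrank ℂ W)) ℂ :=
    Matrix.of fun i j => (b i : ι → ℂ) ⬝ᵥ A *ᵥ (b j : ι → ℂ)
  have hM : Mᵀ = -M := by
    ext i j
    simp only [M, Matrix.transpose_apply, Matrix.of_apply, Matrix.neg_apply]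
    rw [hskew, dotProduct_comm]
  have hdet : M.det ≠ 0 := by
    intro h0
    obtain ⟨c, hc0, hc⟩ := Matrix.exists_mulVec_eq_zero_iff.2 h0
    apply hc0
    set w : W := ∑ j, c j • b j with hw
    have hwW : ∀ i, (b i : ι → ℂ) ⬝ᵥ A *ᵥ (w : ι → ℂ) = 0 := by
      intro i
      have := congrFun hc i
      rw [hw]
      simp only [Submodule.coe_sum, Submodule.coe_smul, Matrix.mulVec_sum, Matrix.mulVec_smul,
        dotProduct_sum, dotProduct_smul]
      simp only [M, Matrix.mulVec, dotProduct, Matrix.of_apply, Pi.zero_apply] at this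
      rw [← this]
      refine Finset.sum_congr rfl fun j _ => ?_
      rw [smul_eq_mul, mul_comm]; rfl
    have hw2 : ∀ u ∈ W, u ⬝ᵥ A *ᵥ (w : ι → ℂ) = 0 := by
      intro u hu
      have := b.sum_repr ⟨u, hu⟩
      have h3 := congrArg Subtype.val this
      simp only [Submodule.coe_sum, Submodule.coe_smul] at h3
      rw [← h3, sum_dotProduct]
      exact Finset.sum_eq_zero fun i _ => by rw [smul_dotProduct, hwW, smul_zero]
    have hAw : A *ᵥ (w : ι → ℂ) = 0 := by
      rw [← dotProduct_eq_zero_iff]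
      intro v
      rw [dotProduct_comm]
      have hv : v ∈ LinearMap.ker A.toLin' ⊔ W := by rw [hW.sup_eq_top]; trivial
      obtain ⟨u, hu, z, hz, rfl⟩ := Submodule.mem_sup.1 hv
      rw [add_dotProduct, hw2 z hz, add_zero, hskew]
      have : A *ᵥ u = 0 := hu
      rw [this, zero_dotProduct, neg_zero]
    have hw0 : w = 0 := by
      have : (w : ι → ℂ) ∈ LinearMap.ker A.toLin' ⊓ W := ⟨hAw, w.2⟩
      rw [hW.inf_eq_bot] at this
      exact Subtype.ext this
    funext j
    exact Fintype.linearIndependent_iff.1 b.linearIndependent c (hw ▸ hw0) j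
  by_contra hodd
  rw [Nat.not_even_iff_odd] at hodd
  have h1 : Mᵀ.det = (-M).det := by rw [hM]
  rw [Matrix.det_transpose, Matrix.det_neg, Fintype.card_fin, hodd.neg_one_pow] at h1
  apply hdet
  linear_combination h1 / 2

/-- Even parts have even multiplicity: the multiplicity of an even `p` is a second difference of the
kernel dimensions of `X^(p-1)`, `X^p`, `X^(p+1)`. The middle one counts twice, and the outer two,
being odd powers, are skew-symmetric and have even rank. -/
lemma admissible_of_skew {X : Matrix ι ι ℂ} (hX : Xᵀ = -X) {m : Multiset ℕ}
    (h0 : ∀ x ∈ m, x ≠ 0) (hm : HasType X.toLin' m) (p : ℕ) (hp : Even p) : Even (m.count p) := by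
  rcases p with _ | p
  · rw [Multiset.count_eq_zero_of_notMem (fun hh => h0 _ hh rfl)]; exact Even.zero
  have key : ∀ j, Odd j → Even ((m.map (fun x => min x j)).sum + Fintype.card ι) := by
    intro j hj
    have hs : (X ^ j)ᵀ = -(X ^ j) := by rw [Matrix.transpose_pow, hX, hj.neg_pow]
    have h1 := even_rank hs
    have h2 := LinearMap.finrank_range_add_finrank_ker (X ^ j).toLin'
    have h3 := hm j
    rw [← Matrix.toLin'_pow] at h3
    rw [h3, Module.finrank_fintype_fun_eq_card] at h2
    rw [Nat.even_iff] at h1 ⊢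
    omega
  have e1 := key p (by rcases hp with ⟨a, ha⟩; exact ⟨a - 1, by omega⟩)
  have e2 := key (p + 2) (by rcases hp with ⟨a, ha⟩; exact ⟨a, by omega⟩)
  have e3 := count_add_sums m p
  rw [Nat.even_iff] at *
  omega

end

/-! ### Orthogonal matrices commuting with a nilpotent of very even type -/

section
variable {V : Type} [AddCommGroup V] [Module ℂ V] [FiniteDimensional ℂ V]

/-- If all Jordan blocks of the nilpotent `f` have even size, then any direct summand of `V` as a
`ℂ[f]`-module, here the kernel of an `h` commuting with `f`, has even dimension: its Jordan blocks
are among those of `f`. -/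
lemma even_finrank_summand {f h : Module.End ℂ V} (hf : IsNilpotent f) {m : Multiset ℕ}
    (hm : HasType f m) (h0 : ∀ x ∈ m, x ≠ 0) (he : ∀ x ∈ m, Even x) (hc : Commute f h)
    (hcompl : IsCompl (LinearMap.ker h) (LinearMap.range h)) :
    Even (finrank ℂ (LinearMap.ker h)) := by
  have hk : ∀ v ∈ LinearMap.ker h, f v ∈ LinearMap.ker h := by
    intro v hv
    rw [LinearMap.mem_ker] at hv ⊢
    rw [← Module.End.mul_apply, ← hc.eq, Module.End.mul_apply, hv, map_zero]
  have hr : ∀ v ∈ LinearMap.range h, f v ∈ LinearMap.range h := by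
    rintro _ ⟨v, rfl⟩
    exact ⟨f v, by rw [← Module.End.mul_apply, ← hc.eq, Module.End.mul_apply]⟩
  obtain ⟨k, hk0⟩ := hf
  have hn1 : IsNilpotent (f.restrict hk) := ⟨k, by
    ext v; rw [Module.End.pow_restrict]; simp [hk0]⟩
  have hn2 : IsNilpotent (f.restrict hr) := ⟨k, by
    ext v; rw [Module.End.pow_restrict]; simp [hk0]⟩
  obtain ⟨m1, h10, hm1⟩ := exists_type _ hn1
  obtain ⟨m2, h20, hm2⟩ := exists_type _ hn2
  have hsum := (hm1.prod hm2).conj (g := f) (Submodule.prodEquivOfIsCompl _ _ hcompl)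
    (fun v => by simp)
  have heq : m1 + m2 = m := type_unique
    (fun x hx => (Multiset.mem_add.1 hx).elim (h10 x) (h20 x)) h0
    (fun i => by rw [← hsum, ← hm])
  rw [← hm1.sum_eq hn1]
  refine Multiset.sum_induction Even m1 (fun a b => Even.add) Even.zero fun x hx => he x ?_
  rw [← heq]
  exact Multiset.mem_add.2 (Or.inl hx)

/-- A generalized eigenspace of `g` is such a summand when `g` commutes with `f`, by Fitting's
lemma. -/
lemma even_finrank_maxGenEigenspace {f g : Module.End ℂ V} (hf : IsNilpotent f) {m : Multiset ℕ}
    (hm : HasType f m) (h0 : ∀ x ∈ m, x ≠ 0) (he : ∀ x ∈ m, Even x) (hc : Commute f g) (c : ℂ) :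
    Even (finrank ℂ (g.maxGenEigenspace c)) := by
  have hc' : Commute f (g - algebraMap ℂ _ c) :=
    hc.sub_right (Algebra.commute_algebraMap_right c f)
  obtain ⟨n, hn⟩ := (((g - algebraMap ℂ _ c).eventually_isCompl_ker_pow_range_pow).and
    (Filter.eventually_ge_atTop (finrank ℂ V))).exists
  have := even_finrank_summand hf hm h0 he (hc'.pow_right n) hn.1
  rw [Module.End.maxGenEigenspace_eq_genEigenspace_finrank]
  have h2 := Module.End.genEigenspace_eq_genEigenspace_finrank_of_le g c hn.2
  rw [← h2, Module.End.genEigenspace_nat]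
  exact this
end

/-- If `H` is the inverse of `G`, then `H - c⁻¹` is `G - c` times a unit commuting with it. -/
lemma maxGenEigenspace_inv_le {V : Type} [AddCommGroup V] [Module ℂ V] {G H : Module.End ℂ V}
    (h1 : G * H = 1) (h2 : H * G = 1) {c : ℂ} (hc : c ≠ 0) :
    G.maxGenEigenspace c ≤ H.maxGenEigenspace c⁻¹ := by
  intro v hv
  rw [Module.End.mem_maxGenEigenspace] at hv ⊢
  obtain ⟨k, hk⟩ := hv
  refine ⟨k, ?_⟩
  have e1 : H - c⁻¹ • 1 = (-c⁻¹ • H) * (G - c • 1) := by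
    rw [mul_sub, smul_mul_assoc, h2, mul_smul_comm, mul_one, smul_smul]
    simp [hc, sub_eq_add_neg, add_comm]
  have hGH : Commute H G := h2.trans h1.symm
  have e2 : Commute (-c⁻¹ • H) (G - c • 1) :=
    (hGH.sub_right ((Commute.one_right H).smul_right c)).smul_left _
  rw [e1, e2.mul_pow, Module.End.mul_apply, hk, map_zero]

/-- An orthogonal matrix commuting with a nilpotent matrix all of whose Jordan blocks have even
size has determinant one: its eigenvalues have even multiplicity and occur in pairs `c, c⁻¹`. -/
lemma det_eq_one {ι : Type} [Fintype ι] [DecidableEq ι] {X g : Matrix ι ι ℂ}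
    (hX : IsNilpotent X) {m : Multiset ℕ} (hm : HasType X.toLin' m) (h0 : ∀ x ∈ m, x ≠ 0)
    (he : ∀ x ∈ m, Even x) (hg : gᵀ * g = 1) (hc : g * X = X * g) : g.det = 1 := by
  have hg' : g * gᵀ = 1 := mul_eq_one_comm.1 hg
  have heven : ∀ c, Even (g.charpoly.roots.count c) := by
    intro c
    have hcomm : Commute X.toLin' g.toLin' := by
      change X.toLin' * g.toLin' = g.toLin' * X.toLin'
      rw [Module.End.mul_eq_comp, Module.End.mul_eq_comp, ← Matrix.toLin'_mul, ← Matrix.toLin'_mul,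
        hc]
    have := even_finrank_maxGenEigenspace (isNilpotent_toLin' hX) hm h0 he hcomm c
    rwa [LinearMap.finrank_maxGenEigenspace_eq, Matrix.charpoly_toLin', ← count_roots] at this
  have hne : ∀ c ∈ g.charpoly.roots, c ≠ 0 := by
    rintro c hc rfl
    have h1 : g.charpoly.coeff 0 = 0 := by
      rw [coeff_zero_eq_eval_zero]
      exact (mem_roots'.1 hc).2
    have h2 := Matrix.det_eq_sign_charpoly_coeff g
    rw [h1, mul_zero] at h2
    have h3 := congrArg Matrix.det hg
    rw [Matrix.det_mul, h2, mul_zero, Matrix.det_one] at h3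
    exact zero_ne_one h3
  have hinv : ∀ c, c ≠ 0 → g.charpoly.roots.count c⁻¹ = g.charpoly.roots.count c := by
    intro c hc0
    have h1 : gᵀ.toLin' * g.toLin' = 1 := by
      rw [Module.End.mul_eq_comp, ← Matrix.toLin'_mul, hg, Matrix.toLin'_one]; rfl
    have h2 : g.toLin' * gᵀ.toLin' = 1 := by
      rw [Module.End.mul_eq_comp, ← Matrix.toLin'_mul, hg', Matrix.toLin'_one]; rfl
    have h3 : Module.End.maxGenEigenspace gᵀ.toLin' c⁻¹ = Module.End.maxGenEigenspace g.toLin' c := by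
      refine le_antisymm ?_ (maxGenEigenspace_inv_le h2 h1 hc0)
      simpa using maxGenEigenspace_inv_le h1 h2 (inv_ne_zero hc0)
    have h4 := congrArg (fun W : Submodule ℂ (ι → ℂ) => finrank ℂ W) h3
    simp only [LinearMap.finrank_maxGenEigenspace_eq, Matrix.charpoly_toLin',
      Matrix.charpoly_transpose] at h4
    rwa [count_roots, count_roots]
  -- `det g` is the square of `∏ c ^ (mult c / 2)`, and that product is its own inverse, by the
  -- substitution of `c⁻¹` for `c`
  have hdet : g.det = (∏ c ∈ g.charpoly.roots.toFinset, c ^ (g.charpoly.roots.count c / 2)) ^ 2 := by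
    rw [Matrix.det_eq_prod_roots_charpoly, Finset.prod_multiset_count, ← Finset.prod_pow]
    refine Finset.prod_congr rfl fun c _ => ?_
    rw [← pow_mul, Nat.div_mul_cancel (heven c).two_dvd]
  have hself : ∏ c ∈ g.charpoly.roots.toFinset, c ^ (g.charpoly.roots.count c / 2) =
      (∏ c ∈ g.charpoly.roots.toFinset, c ^ (g.charpoly.roots.count c / 2))⁻¹ := by
    rw [← Finset.prod_inv_distrib]
    refine Finset.prod_nbij' (fun c => c⁻¹) (fun c => c⁻¹) ?_ ?_ ?_ ?_ ?_
    · intro c hc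
      rw [Multiset.mem_toFinset] at hc ⊢
      rwa [← Multiset.count_pos, hinv c (hne c hc), Multiset.count_pos]
    · intro c hc
      rw [Multiset.mem_toFinset] at hc ⊢
      rwa [← Multiset.count_pos, hinv c (hne c hc), Multiset.count_pos]
    · intro c _; exact inv_inv c
    · intro c _; exact inv_inv c
    · intro c hc
      rw [Multiset.mem_toFinset] at hc
      rw [hinv c (hne c hc), inv_pow, inv_inv]
  rw [hdet, pow_two]
  nth_rewrite 2 [hself]
  refine mul_inv_cancel₀ ?_
  refine Finset.prod_ne_zero_iff.2 fun c hc => pow_ne_zero _ (hne c (Multiset.mem_toFinset.1 hc))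

/-! ### Realization of admissible types -/

/-- There is a nilpotent matrix `J` of type `m` which is skew with respect to some nondegenerate
symmetric form `S`; if `m` has an odd entry, there is moreover an isometry `T` of determinant `-1`
commuting with `J`. -/
def Realizable (m : Multiset ℕ) : Prop :=
  ∃ (ι : Type) (_ : Fintype ι) (_ : DecidableEq ι) (J S : Matrix ι ι ℂ),
    Sᵀ = S ∧ IsUnit S ∧ Jᵀ * S = -(S * J) ∧ IsNilpotent J ∧ HasType J.toLin' m ∧
    ((∃ p ∈ m, Odd p) → ∃ T : Matrix ι ι ℂ, T * J = J * T ∧ Tᵀ * S * T = S ∧ T.det = -1)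

lemma realizable_zero : Realizable 0 := by
  refine ⟨Fin 0, inferInstance, inferInstance, 0, 0, ?_, ?_, ?_, ⟨1, by simp⟩, ?_, by simp⟩
  · exact Subsingleton.elim _ _
  · exact isUnit_of_subsingleton _
  · exact Subsingleton.elim _ _
  · intro i
    simp [Module.finrank_zero_of_subsingleton]

section
variable {ι κ : Type} [Fintype ι] [DecidableEq ι] [Fintype κ] [DecidableEq κ]

lemma hasType_fromBlocks {J : Matrix ι ι ℂ} {J' : Matrix κ κ ℂ} {m m' : Multiset ℕ}
    (h : HasType J.toLin' m) (h' : HasType J'.toLin' m') :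
    HasType (fromBlocks J 0 0 J').toLin' (m + m') :=
  (h.prod h').conj (LinearEquiv.sumArrowLequivProdArrow ι κ ℂ ℂ).symm fun v => by
    apply (LinearEquiv.sumArrowLequivProdArrow ι κ ℂ ℂ).injective
    ext i <;> simp [Matrix.fromBlocks_mulVec, LinearEquiv.sumArrowLequivProdArrow,
      Equiv.sumArrowEquivProdArrow, Function.comp_def]

lemma isNilpotent_fromBlocks {J : Matrix ι ι ℂ} {J' : Matrix κ κ ℂ}
    (h : IsNilpotent J) (h' : IsNilpotent J') : IsNilpotent (fromBlocks J 0 0 J') := by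
  obtain ⟨a, ha⟩ := h
  obtain ⟨b, hb⟩ := h'
  refine ⟨a + b, ?_⟩
  rw [Matrix.fromBlocks_diagonal_pow, pow_add, ha, pow_add J', hb]
  simp

end

lemma Realizable.add {m m' : Multiset ℕ} (h : Realizable m) (h' : Realizable m') :
    Realizable (m + m') := by
  obtain ⟨ι, _, _, J, S, hS, hSu, hJ, hJn, hJt, hT⟩ := h
  obtain ⟨κ, _, _, J', S', hS', hSu', hJ', hJn', hJt', hT'⟩ := h'
  refine ⟨ι ⊕ κ, inferInstance, inferInstance, fromBlocks J 0 0 J', fromBlocks S 0 0 S', ?_, ?_, ?_,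
    isNilpotent_fromBlocks hJn hJn', hasType_fromBlocks hJt hJt', ?_⟩
  · rw [Matrix.fromBlocks_transpose, hS, hS']; simp
  · rw [Matrix.isUnit_iff_isUnit_det] at hSu hSu' ⊢
    rw [Matrix.det_fromBlocks_zero₂₁]
    exact hSu.mul hSu'
  · simp [Matrix.fromBlocks_transpose, Matrix.fromBlocks_multiply, Matrix.fromBlocks_neg, hJ, hJ']
  · rintro ⟨p, hp, hodd⟩
    rcases Multiset.mem_add.1 hp with hp | hp
    · obtain ⟨T, h1, h2, h3⟩ := hT ⟨p, hp, hodd⟩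
      refine ⟨fromBlocks T 0 0 1, ?_, ?_, ?_⟩
      · simp [Matrix.fromBlocks_multiply, h1]
      · simp [Matrix.fromBlocks_transpose, Matrix.fromBlocks_multiply, h2]
      · simp [h3]
    · obtain ⟨T, h1, h2, h3⟩ := hT' ⟨p, hp, hodd⟩
      refine ⟨fromBlocks 1 0 0 T, ?_, ?_, ?_⟩
      · simp [Matrix.fromBlocks_multiply, h1]
      · simp [Matrix.fromBlocks_transpose, Matrix.fromBlocks_multiply, h2]
      · simp [h3]

/-- The lower triangular nilpotent Jordan block of size `p`. -/
def shift (p : ℕ) : Matrix (Fin p) (Fin p) ℂ := Matrix.of fun i j => if i.1 = j.1 + 1 then 1 else 0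

lemma shift_pow (p k : ℕ) :
    shift p ^ k = Matrix.of fun i j : Fin p => if i.1 = j.1 + k then 1 else 0 := by
  induction k with
  | zero =>
    ext i j
    simp [Matrix.one_apply, Fin.ext_iff]
  | succ k ih =>
    ext i j
    rw [pow_succ, ih, Matrix.mul_apply]
    simp only [shift, Matrix.of_apply, mul_ite, mul_one, mul_zero]
    by_cases hj : j.1 + 1 < p
    · rw [Finset.sum_eq_single ⟨j.1 + 1, hj⟩]
      · simp [add_assoc, add_comm 1 k]
      · intro b _ hb
        rw [if_neg]
        intro h; exact hb (Fin.ext h)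
      · simp
    · rw [Finset.sum_eq_zero, if_neg]
      · have := i.2; omega
      · intro b _
        rw [if_neg]
        have := b.2; omega

lemma shift_pow_self (p : ℕ) : shift p ^ p = 0 := by
  rw [shift_pow]
  ext i j
  have := i.2
  simp only [Matrix.of_apply, Matrix.zero_apply]
  rw [if_neg (by omega)]

lemma shift_pow_ne (p : ℕ) (hp : 0 < p) : shift p ^ (p - 1) ≠ 0 := by
  intro h
  have := congrFun (congrFun h ⟨p - 1, by omega⟩) ⟨0, hp⟩
  rw [shift_pow] at this
  simp at this

lemma hasType_single_matrix {p : ℕ} {A : Matrix (Fin p) (Fin p) ℂ} (h0 : A ^ p = 0)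
    (h1 : 0 < p → A ^ (p - 1) ≠ 0) : HasType A.toLin' {p} := by
  apply hasType_single (by simp)
  · rw [← Matrix.toLin'_pow, h0, map_zero]
  · intro hp
    rw [← Matrix.toLin'_pow]
    intro h
    exact h1 hp ((LinearEquiv.map_eq_zero_iff _).1 h)

/-- A Jordan block of odd size `p` is skew for the form pairing `e_i` with `±e_{p-1-i}`,
with alternating signs. -/
lemma realizable_odd {p : ℕ} (hp : Odd p) : Realizable {p} := by
  let S : Matrix (Fin p) (Fin p) ℂ := Matrix.of fun i j => if i.1 + j.1 + 1 = p then (-1) ^ i.1 else 0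
  have hSS : S * S = 1 := by
    ext i j
    rw [Matrix.mul_apply, Finset.sum_eq_single (Fin.rev i)]
    · have := i.2
      have hi : i.1 + (p - (i.1 + 1)) + 1 = p := by omega
      simp only [S, Matrix.of_apply, Fin.val_rev, if_pos hi, Matrix.one_apply, Fin.ext_iff]
      by_cases hij : i.1 = j.1
      · rw [if_pos hij, if_pos (by omega), ← pow_add]
        exact Even.neg_one_pow (by obtain ⟨a, ha⟩ := hp; exact ⟨a, by omega⟩)
      · rw [if_neg hij, if_neg (by omega), mul_zero]
    · intro b _ hb
      simp only [S, Matrix.of_apply]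
      rw [if_neg, zero_mul]
      intro h
      apply hb
      rw [Fin.ext_iff, Fin.val_rev]
      omega
    · simp
  refine ⟨Fin p, inferInstance, inferInstance, shift p, S, ?_, IsUnit.of_mul_eq_one _ hSS, ?_,
    ⟨p, shift_pow_self p⟩, hasType_single_matrix (shift_pow_self p) (shift_pow_ne p), ?_⟩
  · ext i j
    simp only [S, Matrix.transpose_apply, Matrix.of_apply]
    by_cases h : i.1 + j.1 + 1 = p
    · rw [if_pos h, if_pos (by omega)]
      have : Even (i.1 + j.1) := by obtain ⟨a, ha⟩ := hp; exact ⟨a, by omega⟩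
      rw [Nat.even_add] at this
      by_cases hi : Even i.1
      · rw [hi.neg_one_pow, (this.1 hi).neg_one_pow]
      · have hj : ¬ Even j.1 := fun h => hi (this.2 h)
        rw [Nat.not_even_iff_odd] at hi hj
        rw [hi.neg_one_pow, hj.neg_one_pow]
    · rw [if_neg h, if_neg (by omega)]
  · ext i j
    have hL : ((shift p)ᵀ * S) i j = if i.1 + j.1 + 2 = p then (-1) ^ (i.1 + 1) else 0 := by
      rw [Matrix.mul_apply]
      simp only [S, shift, Matrix.transpose_apply, Matrix.of_apply, ite_mul, one_mul, zero_mul]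
      by_cases hi : i.1 + 1 < p
      · rw [Finset.sum_eq_single ⟨i.1 + 1, hi⟩]
        · simp only [if_true]
          congr 1
          simp only [eq_iff_iff]; omega
        · intro b _ hb
          rw [if_neg]
          intro h; exact hb (Fin.ext h)
        · simp
      · rw [Finset.sum_eq_zero, if_neg (by omega)]
        intro b _
        rw [if_neg]
        have := b.2; omega
    have hR : (S * shift p) i j = if i.1 + j.1 + 2 = p then (-1) ^ i.1 else 0 := by
      rw [Matrix.mul_apply]
      simp only [S, shift, Matrix.of_apply, mul_ite, mul_one, mul_zero]
      by_cases hj : j.1 + 1 < p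
      · rw [Finset.sum_eq_single ⟨j.1 + 1, hj⟩]
        · simp only [if_true]
          congr 1
        · intro b _ hb
          rw [if_neg]
          intro h; exact hb (Fin.ext h)
        · simp
      · rw [Finset.sum_eq_zero, if_neg (by omega)]
        intro b _
        rw [if_neg]
        have := b.2; omega
    rw [Matrix.neg_apply, hL, hR]
    split_ifs
    · rw [pow_succ]; ring
    · simp
  · intro _
    exact ⟨-1, by simp, by simp, by simp [Matrix.det_neg, hp.neg_one_pow]⟩

/-- Two blocks of the same even size: `J ⊕ (-Jᵀ)` is skew for the pairing of a space with its
dual. -/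
lemma realizable_pair {p : ℕ} (hp : Even p) : Realizable {p, p} := by
  have h0 : (-(shift p)ᵀ) ^ p = 0 := by
    rw [hp.neg_pow, ← Matrix.transpose_pow, shift_pow_self, Matrix.transpose_zero]
  have h1 : 0 < p → (-(shift p)ᵀ) ^ (p - 1) ≠ 0 := by
    intro h hh
    have h3 : (shift p)ᵀ ^ (p - 1) = 0 := by
      rw [neg_pow] at hh
      rcases neg_one_pow_eq_or (Matrix (Fin p) (Fin p) ℂ) (p - 1) with h2 | h2 <;>
        simpa [h2] using hh
    rw [← Matrix.transpose_pow, Matrix.transpose_eq_zero] at h3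
    exact shift_pow_ne p h h3
  refine ⟨Fin p ⊕ Fin p, inferInstance, inferInstance, fromBlocks (shift p) 0 0 (-(shift p)ᵀ),
    fromBlocks 0 1 1 0, ?_, ?_, ?_, isNilpotent_fromBlocks ⟨p, shift_pow_self p⟩ ⟨p, h0⟩,
    hasType_fromBlocks (hasType_single_matrix (shift_pow_self p) (shift_pow_ne p))
      (hasType_single_matrix h0 h1), ?_⟩
  · simp [Matrix.fromBlocks_transpose]
  · refine IsUnit.of_mul_eq_one (fromBlocks 0 1 1 0) ?_
    simp [Matrix.fromBlocks_multiply]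
  · simp [Matrix.fromBlocks_transpose, Matrix.fromBlocks_multiply, Matrix.fromBlocks_neg]
  · rintro ⟨q, hq, hodd⟩
    simp only [Multiset.insert_eq_cons, Multiset.mem_cons, Multiset.mem_singleton, or_self] at hq
    subst hq
    exact absurd hp (Nat.not_even_iff_odd.2 hodd)

/-- By induction on the number of parts: an odd part is split off alone, an even part together with
a second copy of itself. -/
lemma realizable_of_admissible (m : Multiset ℕ) (h : ∀ p, Even p → Even (m.count p)) :
    Realizable m := by
  induction hn : m.card using Nat.strong_induction_on generalizing m with
  | _ n ih =>
  subst hn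
  rcases m.empty_or_exists_mem with rfl | ⟨a, ha⟩
  · exact realizable_zero
  obtain ⟨s, rfl⟩ := Multiset.exists_cons_of_mem ha
  rcases Nat.even_or_odd a with hae | hao
  · have h1 := h a hae
    rw [Multiset.count_cons_self] at h1
    have : a ∈ s := by
      rw [← Multiset.count_pos]
      rcases h1 with ⟨b, hb⟩; omega
    obtain ⟨t, rfl⟩ := Multiset.exists_cons_of_mem this
    have hsplit : a ::ₘ a ::ₘ t = {a, a} + t := by simp
    rw [hsplit]
    refine (realizable_pair hae).add (ih t.card ?_ t ?_ rfl)
    · simp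
    · intro p hp
      have := h p hp
      rw [Multiset.count_cons, Multiset.count_cons, Nat.even_iff] at this
      rw [Nat.even_iff]
      split_ifs at this <;> omega
  · rw [← Multiset.singleton_add]
    refine (realizable_odd hao).add (ih s.card ?_ s ?_ rfl)
    · simp
    · intro p hp
      have := h p hp
      rwa [Multiset.count_cons_of_ne] at this
      rintro rfl
      exact Nat.not_even_iff_odd.2 hao hp

/-! ### Orbits of the special orthogonal group -/

/-- A realizable type of total size `N` is realized by a skew-symmetric `N × N` matrix: the form
`S` is brought to the standard one by its symmetric square root. -/
lemma exists_skew {N : ℕ} {m : Multiset ℕ} (h : Realizable m) (hN : m.sum = N) :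
    ∃ X : Matrix (Fin N) (Fin N) ℂ, Xᵀ = -X ∧ IsNilpotent X ∧ HasType X.toLin' m ∧
      ((∃ p ∈ m, Odd p) → ∃ T : Matrix (Fin N) (Fin N) ℂ,
        T * X = X * T ∧ Tᵀ * T = 1 ∧ T.det = -1) := by
  obtain ⟨ι, _, _, J, S, hS, hSu, hJ, hJn, hJt, hT⟩ := h
  have hcard : Fintype.card ι = N := by
    rw [← hN, hJt.sum_eq (isNilpotent_toLin' hJn), Module.finrank_fintype_fun_eq_card]
  let e : ι ≃ Fin N := Fintype.equivFinOfCardEq hcard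
  obtain ⟨U, hU, hUt, hUu, -⟩ := exists_symm_sqrt S hSu hS
  obtain ⟨V, hUV, hVU⟩ : ∃ V, U * V = 1 ∧ V * U = 1 := by
    obtain ⟨u, rfl⟩ := hUu
    exact ⟨_, u.mul_inv, u.inv_mul⟩
  have hVt : Vᵀ = V := by
    have : Vᵀ * U = 1 := by
      rw [← hUt, ← Matrix.transpose_mul, hUV, Matrix.transpose_one]
    rw [← mul_one Vᵀ, ← hUV, ← mul_assoc, this, one_mul]
  -- conjugation by the square root of `S`, followed by a renumbering of the coordinates
  let φ : Matrix ι ι ℂ ≃ₐ[ℂ] Matrix (Fin N) (Fin N) ℂ := Matrix.reindexAlgEquiv ℂ ℂ e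
  have hφt : ∀ A, (φ A)ᵀ = φ Aᵀ := fun A => rfl
  have hφd : ∀ A, (φ A).det = A.det := fun A => Matrix.det_reindex_self e A
  refine ⟨φ (U * J * V), ?_, ?_, ?_, ?_⟩
  · rw [hφt, ← map_neg]
    congr 1
    rw [Matrix.transpose_mul, Matrix.transpose_mul, hVt, hUt]
    have h1 : Jᵀ * U * U = -(U * U * J) := by rw [mul_assoc, hU, hJ]
    have h2 : Jᵀ * U = -(U * U * J) * V := by rw [← h1, mul_assoc, hUV, mul_one]
    rw [h2, neg_mul, mul_neg, mul_assoc U U, mul_assoc U, ← mul_assoc V, hVU, one_mul]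
  · obtain ⟨k, hk⟩ := hJn
    refine ⟨k, ?_⟩
    have := Units.conj_pow (⟨U, V, hUV, hVU⟩ : (Matrix ι ι ℂ)ˣ) J k
    simp only [Units.inv_mk] at this
    rw [← map_pow, this, hk]
    simp
  · have h1 : HasType (U * J * V).toLin' m :=
      hJt.conj (Matrix.toLin'OfInv hVU hUV) fun v => by
        simp [Matrix.toLin'OfInv, mul_assoc, hVU]
    refine h1.conj (LinearEquiv.funCongrLeft ℂ ℂ e.symm) fun v => ?_
    funext i
    change (U * J * V).mulVec v (e.symm i) =
      ((U * J * V).submatrix e.symm e.symm).mulVec (v ∘ e.symm) i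
    rw [Matrix.submatrix_mulVec_equiv]
    simp [Function.comp_def]
  · intro hodd
    obtain ⟨T, h1, h2, h3⟩ := hT hodd
    refine ⟨φ (U * T * V), ?_, ?_, ?_⟩
    · rw [← map_mul, ← map_mul]
      congr 1
      have hc : ∀ A B : Matrix ι ι ℂ, U * A * V * (U * B * V) = U * (A * B) * V := fun A B => by
        simp only [mul_assoc]
        rw [← mul_assoc V U, hVU, one_mul]
      rw [hc, hc, h1]
    · rw [hφt, ← map_mul, ← map_one φ]
      congr 1
      rw [Matrix.transpose_mul, Matrix.transpose_mul, hVt, hUt]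
      have h4 : V * (Tᵀ * U) * (U * T * V) = V * (Tᵀ * (U * U) * T) * V := by
        simp only [mul_assoc]
      rw [h4, hU, h2, ← hU, ← mul_assoc, hVU, one_mul, hUV]
    · rw [hφd, Matrix.det_mul, Matrix.det_mul, h3, mul_right_comm, ← Matrix.det_mul, hUV]
      simp

/-- Nilpotent skew-symmetric matrices of the same type are conjugate under the full orthogonal
group. -/
lemma exists_orth_of_type {N : ℕ} {X Y : Matrix (Fin N) (Fin N) ℂ} (hX : Xᵀ = -X) (hY : Yᵀ = -Y)
    (hXn : IsNilpotent X) (hYn : IsNilpotent Y) {m : Multiset ℕ} (hXm : HasType X.toLin' m)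
    (hYm : HasType Y.toLin' m) : ∃ g : Matrix (Fin N) (Fin N) ℂ, gᵀ * g = 1 ∧ g * X = Y * g := by
  obtain ⟨e, he⟩ := exists_conj (isNilpotent_toLin' hXn) (isNilpotent_toLin' hYn) hXm hYm
  have h1 : LinearMap.toMatrix' (e : (Fin N → ℂ) →ₗ[ℂ] (Fin N → ℂ)) *
      LinearMap.toMatrix' (e.symm : (Fin N → ℂ) →ₗ[ℂ] (Fin N → ℂ)) = 1 := by
    rw [← LinearMap.toMatrix'_comp]
    simp
  refine exists_orth hX hY (IsUnit.of_mul_eq_one _ h1) ?_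
  apply Matrix.toLin'.injective
  rw [Matrix.toLin'_mul, Matrix.toLin'_mul, Matrix.toLin'_toMatrix']
  exact LinearMap.ext he

section
variable {ι : Type} [Fintype ι] [DecidableEq ι]

lemma det_orth {g : Matrix ι ι ℂ} (h : gᵀ * g = 1) : g.det = 1 ∨ g.det = -1 := by
  have := congrArg Matrix.det h
  rw [Matrix.det_mul, Matrix.det_transpose, Matrix.det_one] at this
  exact mul_self_eq_one_iff.1 this

lemma orth_mul {g h : Matrix ι ι ℂ} (hg : gᵀ * g = 1) (hh : hᵀ * h = 1) :
    (g * h)ᵀ * (g * h) = 1 := by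
  rw [Matrix.transpose_mul, mul_assoc, ← mul_assoc gᵀ, hg, one_mul, hh]

end

lemma soConj_of {N : ℕ} {X Y g : Matrix (Fin N) (Fin N) ℂ} (hg : gᵀ * g = 1) (hd : g.det = 1)
    (h : g * X = Y * g) : SOConj N X Y := by
  refine ⟨g, ⟨hg, hd⟩, ?_⟩
  rw [h, Matrix.mul_nonsing_inv_cancel_right _ _ (by rw [hd]; exact isUnit_one)]

end

/-- The Jordan type induces a surjection from the set of nilpotent `SO(2n, ℂ)`-orbits in
`so(2n, ℂ)` onto the set of `1`-admissible partitions of `2n`: every nilpotent element of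
`so(2n, ℂ)` has a `1`-admissible Jordan type, and every `1`-admissible partition of `2n`
is realized.  If a `1`-admissible partition `d` of `2n` has at least one odd part, the
nilpotent elements of `so(2n, ℂ)` of Jordan type `d` form exactly one `SO(2n, ℂ)`-orbit;
if `d` is very even, they form exactly two `SO(2n, ℂ)`-orbits. -/
theorem soEvenNilpotentOrbitClassification (n : ℕ) (hn : 1 ≤ n) :
    (∀ X ∈ soSet (2 * n), IsNilpotent X →
      ∃ d : Nat.Partition (2 * n), EpsAdmissible 1 d ∧ MatJordanType X d)
    ∧ (∀ d : Nat.Partition (2 * n), EpsAdmissible 1 d →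
        ∃ X ∈ soSet (2 * n), IsNilpotent X ∧ MatJordanType X d)
    ∧ (∀ d : Nat.Partition (2 * n), EpsAdmissible 1 d → (∃ p ∈ d.parts, Odd p) →
        ∀ X ∈ soSet (2 * n), ∀ Y ∈ soSet (2 * n),
          IsNilpotent X → IsNilpotent Y → MatJordanType X d → MatJordanType Y d →
            SOConj (2 * n) X Y)
    ∧ (∀ d : Nat.Partition (2 * n), VeryEven d →
        ∃ X ∈ soSet (2 * n), ∃ Y ∈ soSet (2 * n),
          IsNilpotent X ∧ IsNilpotent Y ∧ MatJordanType X d ∧ MatJordanType Y d ∧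
          ¬ SOConj (2 * n) X Y ∧
          ∀ Z ∈ soSet (2 * n), IsNilpotent Z → MatJordanType Z d →
            (SOConj (2 * n) Z X ∨ SOConj (2 * n) Z Y)) := by
  have hpos : ∀ d : Nat.Partition (2 * n), ∀ x ∈ d.parts, x ≠ 0 :=
    fun d x hx => (d.parts_pos hx).ne'
  have hreal : ∀ d : Nat.Partition (2 * n), EpsAdmissible 1 d → Realizable d.parts :=
    fun d hd => realizable_of_admissible _ fun p hp => hd p (Or.inl ⟨rfl, hp⟩)
  refine ⟨?_, ?_, ?_, ?_⟩
  · intro X hX hXn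
    obtain ⟨m, h0, hm⟩ := exists_type _ (isNilpotent_toLin' hXn)
    have hsum : m.sum = 2 * n := by
      rw [hm.sum_eq (isNilpotent_toLin' hXn)]; simp
    refine ⟨⟨m, fun hx => Nat.pos_of_ne_zero (h0 _ hx), hsum⟩, ?_, hm⟩
    rintro p (⟨-, hp⟩ | ⟨h, -⟩)
    · exact admissible_of_skew hX h0 hm p hp
    · norm_num at h
  · intro d hd
    obtain ⟨X, hX, hXn, hXm, -⟩ := exists_skew (hreal d hd) d.parts_sum
    exact ⟨X, hX, hXn, hXm⟩
  · intro d hd hodd X hX Y hY hXn hYn hXd hYd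
    obtain ⟨Z, hZ, hZn, hZm, hT⟩ := exists_skew (hreal d hd) d.parts_sum
    obtain ⟨T, hT1, hT2, hT3⟩ := hT hodd
    obtain ⟨a, ha, ha'⟩ := exists_orth_of_type hX hZ hXn hZn hXd hZm
    obtain ⟨b, hb, hb'⟩ := exists_orth_of_type hZ hY hZn hYn hZm hYd
    have hdet : (b * a).det = 1 ∨ (b * a).det = -1 := det_orth (orth_mul hb ha)
    rcases hdet with hdet | hdet
    · refine soConj_of (orth_mul hb ha) hdet ?_
      rw [mul_assoc, ha', ← mul_assoc, hb', mul_assoc]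
    · refine soConj_of (orth_mul hb (orth_mul hT2 ha)) ?_ ?_
      · rw [Matrix.det_mul] at hdet
        rw [Matrix.det_mul, Matrix.det_mul, hT3]
        linear_combination -hdet
      · rw [mul_assoc, mul_assoc, ha', ← mul_assoc T, hT1, mul_assoc, ← mul_assoc b, hb', mul_assoc]
  · intro d hd
    have hadm : EpsAdmissible 1 d := by
      intro p _
      by_cases hp : p ∈ d.parts
      · exact (hd p hp).2
      · rw [Multiset.count_eq_zero_of_notMem hp]; exact Even.zero
    obtain ⟨X, hX, hXn, hXm, -⟩ := exists_skew (hreal d hadm) d.parts_sum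
    -- a reflection
    let r : Matrix (Fin (2 * n)) (Fin (2 * n)) ℂ :=
      Matrix.diagonal (Function.update 1 ⟨0, by omega⟩ (-1))
    have hrt : rᵀ = r := Matrix.diagonal_transpose _
    have hrr : r * r = 1 := by
      rw [Matrix.diagonal_mul_diagonal, ← Matrix.diagonal_one]
      congr 1
      funext i
      by_cases hi : i = ⟨0, by omega⟩
      · subst hi; simp
      · simp [Function.update_of_ne hi]
    have hro : rᵀ * r = 1 := by rw [hrt, hrr]
    have hrd : r.det = -1 := by
      rw [Matrix.det_diagonal, Finset.prod_update_of_mem (Finset.mem_univ _)]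
      simp
    have hY : (r * X * r)ᵀ = -(r * X * r) := by
      rw [Matrix.transpose_mul, Matrix.transpose_mul, hrt, show Xᵀ = -X from hX]
      simp [mul_assoc]
    have hYn : IsNilpotent (r * X * r) := by
      obtain ⟨k, hk⟩ := hXn
      refine ⟨k, ?_⟩
      have := Units.conj_pow (⟨r, r, hrr, hrr⟩ : (Matrix (Fin (2 * n)) (Fin (2 * n)) ℂ)ˣ) X k
      simp only [Units.inv_mk] at this
      rw [this, hk]
      simp
    have hYm : HasType (r * X * r).toLin' d.parts :=
      hXm.conj (Matrix.toLin'OfInv hrr hrr) fun v => by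
        simp [Matrix.toLin'OfInv, mul_assoc, hrr]
    refine ⟨X, hX, r * X * r, hY, hXn, hYn, hXm, hYm, ?_, ?_⟩
    · rintro ⟨g, ⟨hg, hgd⟩, h⟩
      have h1 : g * X = r * X * r * g := by
        rw [← h, Matrix.nonsing_inv_mul_cancel_right _ _ (by rw [hgd]; exact isUnit_one)]
      have h2 := det_eq_one (g := r * g) hXn hXm (hpos d) (fun x hx => (hd x hx).1)
        (orth_mul hro hg) (by
          rw [mul_assoc, h1, mul_assoc, mul_assoc, ← mul_assoc r r, hrr, one_mul])
      rw [Matrix.det_mul, hrd, hgd] at h2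
      norm_num at h2
    · intro Z hZ hZn hZm
      obtain ⟨g, hg, hg'⟩ := exists_orth_of_type hZ hX hZn hXn hZm hXm
      rcases det_orth hg with hdet | hdet
      · exact Or.inl (soConj_of hg hdet hg')
      · refine Or.inr (soConj_of (orth_mul hro hg) ?_ ?_)
        · rw [Matrix.det_mul, hrd, hdet]; norm_num
        · rw [mul_assoc, hg']
          simp only [mul_assoc]
          rw [← mul_assoc r r, hrr, one_mul]
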